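/- arXiv:1406.4052 — 4 statements merged into one kernel-verified Lean document; each statement's English description precedes it below -/
import Mathlib

section
/- Assume the dyadic wavelet-type system with each e_k differentiable and ‖e_k′‖_∞ ≤ 2^{3 j_k/2} M₁ for all k. Then for every x ∈ ℝ and every real sequence (η_k)_{k≥1} with Σ_{k=1}^∞ k⁴ η_k² < ∞, the series Σ_{k=1}^∞ η_k e_k′(x) converges absolutely and | Σ_{k=1}^∞ η_k e_k′(x) | ≤ √34 · M₁ · ( Σ_{k=1}^∞ k⁴ η_k² )^{1/2}. -/
/-!
Near `x`, every member of a finite family with nonvanishing derivatives at `x` is nonzero on a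
common punctured neighbourhood, so a bound on the number of functions of one level that are nonzero
at a point passes to their derivatives.

Since `2 ^ j ≤ k` for the level `j` of `k`, the `k`-th term is at most `k² |η_k| · M 2^(-j/2)`.
At most `N` terms of each level being nonzero, the squares of the second factors sum to at most
`N ∑ⱼ M² 2^(-j) = 2 N M²`, and Cauchy–Schwarz gives the constant `√(2 N) M`.
-/

open Filter Topology

section LevelMultiplicity

variable {ι κ F : Type*} {lev : ι → κ} {N : ℕ}

/-- The multiplicity of a family `v` graded by `lev`: at most `N` of the nonzero `v k` share any
given level. Stated through finsets, so that finiteness of the level sets is part of the claim. -/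
def LevelMultiplicityLE [Zero F] (lev : ι → κ) (v : ι → F) (N : ℕ) : Prop :=
  ∀ (j : κ) (S : Finset ι), (∀ k ∈ S, lev k = j ∧ v k ≠ 0) → S.card ≤ N

namespace LevelMultiplicityLE

theorem sum_comp_le [Zero F] {v : ι → F} (hv : LevelMultiplicityLE lev v N) {S : Finset ι}
    (hS : ∀ k ∈ S, v k ≠ 0) {g : κ → ℝ} (hg_nonneg : ∀ j, 0 ≤ g j) (hg : Summable g) :
    ∑ k ∈ S, g (lev k) ≤ N * ∑' j, g j := by
  classical
  have hcard (j : κ) : (S.filter fun k => lev k = j).card ≤ N :=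
    hv j _ fun k hk => ⟨(Finset.mem_filter.1 hk).2, hS k (Finset.mem_filter.1 hk).1⟩
  calc ∑ k ∈ S, g (lev k)
      = ∑ j ∈ S.image lev, (S.filter fun k => lev k = j).card * g j := by
        simp only [Finset.sum_comp g lev, nsmul_eq_mul]
    _ ≤ ∑ j ∈ S.image lev, N * g j := by
        gcongr with j
        exacts [hg_nonneg j, hcard j]
    _ = N * ∑ j ∈ S.image lev, g j := by rw [Finset.mul_sum]
    _ ≤ N * ∑' j, g j := by
        gcongr
        exact hg.sum_le_tsum _ fun j _ => hg_nonneg j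

variable [NormedAddCommGroup F]

theorem of_hasDerivAt {𝕜 : Type*} [NontriviallyNormedField 𝕜] [NormedSpace 𝕜 F]
    {f : ι → 𝕜 → F} {f' : ι → F} {x : 𝕜}
    (hf : ∀ y, LevelMultiplicityLE lev (fun k => f k y) N)
    (hderiv : ∀ k, HasDerivAt (f k) (f' k) x) :
    LevelMultiplicityLE lev f' N := by
  intro j S hS
  have hne : ∀ᶠ y in 𝓝[≠] x, ∀ k ∈ S, f k y ≠ 0 :=
    (Finset.eventually_all S).2 fun k hk => (hderiv k).eventually_ne (hS k hk).2
  obtain ⟨y, hy⟩ := hne.exists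
  exact hf y j S fun k hk => ⟨(hS k hk).1, hy k hk⟩

variable {v : ι → F} {a : ι → ℝ} {g : κ → ℝ}

theorem sum_norm_le (hv : LevelMultiplicityLE lev v N) (hbound : ∀ k, ‖v k‖ ≤ a k * g (lev k))
    (ha : Summable fun k => a k ^ 2) (hg : Summable fun j => g j ^ 2) (S : Finset ι) :
    ∑ k ∈ S, ‖v k‖ ≤ √(N * ∑' j, g j ^ 2) * √(∑' k, a k ^ 2) := by
  classical
  let T := S.filter fun k => v k ≠ 0
  calc ∑ k ∈ S, ‖v k‖
      = ∑ k ∈ T, ‖v k‖ := (Finset.sum_filter_of_ne fun k _ => norm_ne_zero_iff.1).symm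
    _ ≤ ∑ k ∈ T, g (lev k) * a k :=
        Finset.sum_le_sum fun k _ => (hbound k).trans_eq (mul_comm _ _)
    _ ≤ √(∑ k ∈ T, g (lev k) ^ 2) * √(∑ k ∈ T, a k ^ 2) :=
        Real.sum_mul_le_sqrt_mul_sqrt T _ _
    _ ≤ √(N * ∑' j, g j ^ 2) * √(∑' k, a k ^ 2) := by
        gcongr
        · exact hv.sum_comp_le (fun k hk => (Finset.mem_filter.1 hk).2)
            (fun j => sq_nonneg (g j)) hg
        · exact ha.sum_le_tsum _ fun k _ => sq_nonneg (a k)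

theorem summable_norm (hv : LevelMultiplicityLE lev v N) (hbound : ∀ k, ‖v k‖ ≤ a k * g (lev k))
    (ha : Summable fun k => a k ^ 2) (hg : Summable fun j => g j ^ 2) :
    Summable fun k => ‖v k‖ :=
  summable_of_sum_le (fun k => norm_nonneg (v k)) (hv.sum_norm_le hbound ha hg)

theorem tsum_norm_le (hv : LevelMultiplicityLE lev v N) (hbound : ∀ k, ‖v k‖ ≤ a k * g (lev k))
    (ha : Summable fun k => a k ^ 2) (hg : Summable fun j => g j ^ 2) :
    ∑' k, ‖v k‖ ≤ √(N * ∑' j, g j ^ 2) * √(∑' k, a k ^ 2) :=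
  (hv.summable_norm hbound ha hg).tsum_le_of_sum_le (hv.sum_norm_le hbound ha hg)

end LevelMultiplicityLE

end LevelMultiplicity

theorem two_pow_le_of_two_pow_sub_one_mul_le {c j k : ℕ} (hc : 2 ≤ c) (hk : 1 ≤ k)
    (h : (2 ^ j - 1) * c ≤ k) : 2 ^ j ≤ k := by
  have hdouble : (2 ^ j - 1) * 2 ≤ k := (Nat.mul_le_mul_left _ hc).trans h
  omega

theorem two_rpow_three_mul_div_two_le {j : ℕ} {t : ℝ} (ht : 2 ^ j ≤ t) :
    (2 : ℝ) ^ (3 * (j : ℝ) / 2) ≤ t ^ 2 * (√2)⁻¹ ^ j := by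
  have hsq : (√2 ^ j) ^ 2 = (2 : ℝ) ^ j := by rw [pow_right_comm, Real.sq_sqrt zero_le_two]
  calc (2 : ℝ) ^ (3 * (j : ℝ) / 2)
      = (√2 ^ j) ^ 3 := by
        rw [Real.rpow_div_two_eq_sqrt _ zero_le_two, ← pow_mul', ← Real.rpow_natCast]
        push_cast
        rfl
    _ = ((√2 ^ j) ^ 2) ^ 2 * (√2)⁻¹ ^ j := by rw [inv_pow]; field_simp
    _ ≤ t ^ 2 * (√2)⁻¹ ^ j := by rw [hsq]; gcongr

theorem norm_smul_le_of_two_pow_le {𝕜 F : Type*} [NormedField 𝕜] [SeminormedAddCommGroup F]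
    [NormedSpace 𝕜 F] {c : 𝕜} {u : F} {j : ℕ} {t M : ℝ} (hM : 0 ≤ M) (ht : 2 ^ j ≤ t)
    (hu : ‖u‖ ≤ 2 ^ (3 * (j : ℝ) / 2) * M) :
    ‖c • u‖ ≤ (t ^ 2 * ‖c‖) * (M * (√2)⁻¹ ^ j) := by
  calc ‖c • u‖ = ‖c‖ * ‖u‖ := norm_smul c u
    _ ≤ ‖c‖ * (t ^ 2 * (√2)⁻¹ ^ j * M) := by grw [hu, two_rpow_three_mul_div_two_le ht]
    _ = (t ^ 2 * ‖c‖) * (M * (√2)⁻¹ ^ j) := by ring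

theorem hasSum_sq_mul_inv_sqrt_two_pow (M : ℝ) :
    HasSum (fun j : ℕ => (M * (√2)⁻¹ ^ j) ^ 2) (2 * M ^ 2) := by
  have hterm (j : ℕ) : (M * (√2)⁻¹ ^ j) ^ 2 = (1 / 2 : ℝ) ^ j * M ^ 2 := by
    rw [mul_pow, pow_right_comm, inv_pow, Real.sq_sqrt zero_le_two, one_div, mul_comm]
  simpa only [hterm] using hasSum_geometric_two.mul_right (M ^ 2)

theorem wavelet_derivative_series_bound_general {𝕜 F : Type*} [NontriviallyNormedField 𝕜]
    [NormedAddCommGroup F] [NormedSpace 𝕜 F]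
    {lev : ℕ → ℕ} (hlev : ∀ k, 1 ≤ k → 2 ^ lev k ≤ k)
    {e : ℕ → 𝕜 → F} {e' : ℕ → F} {x : 𝕜} {N : ℕ} {M : ℝ}
    (hoverlap : ∀ (y : 𝕜) (j : ℕ) (S : Finset ℕ),
      (∀ k ∈ S, 1 ≤ k ∧ lev k = j ∧ e k y ≠ 0) → S.card ≤ N)
    (hderiv : ∀ k, 1 ≤ k → HasDerivAt (e k) (e' k) x)
    (hbound : ∀ k, 1 ≤ k → ‖e' k‖ ≤ 2 ^ (3 * (lev k : ℝ) / 2) * M)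
    {η : ℕ → 𝕜} (hη0 : η 0 = 0) (hsum : Summable fun k : ℕ => (k : ℝ) ^ 4 * ‖η k‖ ^ 2) :
    Summable (fun k => ‖η k • e' k‖) ∧
      ∑' k, ‖η k • e' k‖ ≤ √(2 * N) * M * √(∑' k : ℕ, (k : ℝ) ^ 4 * ‖η k‖ ^ 2) := by
  have hM : 0 ≤ M :=
    nonneg_of_mul_nonneg_right ((norm_nonneg _).trans (hbound 1 le_rfl)) (by positivity)
  have hpos {k : ℕ} (hk : η k ≠ 0) : 1 ≤ k := Nat.one_le_iff_ne_zero.2 fun h => hk (h ▸ hη0)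
  -- Nothing is assumed of `e 0`; scaling by `η` replaces it by the zero function.
  have hmult : LevelMultiplicityLE lev (fun k => η k • e' k) N := by
    refine .of_hasDerivAt (f := fun k y => η k • e k y) (x := x) (fun y j S hS => ?_) fun k => ?_
    · refine hoverlap y j S fun k hk => ?_
      obtain ⟨hlevel, hne⟩ := hS k hk
      exact ⟨hpos (left_ne_zero_of_smul hne), hlevel, right_ne_zero_of_smul hne⟩
    · by_cases hk : η k = 0
      · simpa [hk] using hasDerivAt_const x (0 : F)
      · exact (hderiv k (hpos hk)).const_smul (η k)
  have hterm (k : ℕ) : ‖η k • e' k‖ ≤ ((k : ℝ) ^ 2 * ‖η k‖) * (M * (√2)⁻¹ ^ lev k) := by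
    by_cases hk : η k = 0
    · simp [hk]
    · exact norm_smul_le_of_two_pow_le hM (mod_cast hlev k (hpos hk)) (hbound k (hpos hk))
  have hg := hasSum_sq_mul_inv_sqrt_two_pow M
  have hconst : √(N * (2 * M ^ 2)) = √(2 * N) * M := by
    rw [← mul_assoc, mul_comm (N : ℝ), Real.sqrt_mul (by positivity), Real.sqrt_sq hM]
  have hsq (k : ℕ) : (k : ℝ) ^ 4 * ‖η k‖ ^ 2 = ((k : ℝ) ^ 2 * ‖η k‖) ^ 2 := by ring
  simp only [hsq] at hsum ⊢
  rw [← hconst, ← hg.tsum_eq]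
  exact ⟨hmult.summable_norm hterm hsum hg.summable, hmult.tsum_norm_le hterm hsum hg.summable⟩

/-- in the dyadic wavelet-type system, if `‖e_k′‖_∞ ≤ 2^{3j_k/2} M₁` for all
`k ≥ 1`, then for every `x ∈ ℝ` and every sequence `(η_k)_{k≥1}` with `Σ_{k≥1} k⁴ η_k² < ∞`
(encoded by `η : ℕ → ℝ` with the convention `η 0 = 0`), the series `Σ_k η_k e_k′(x)` converges
absolutely and `|Σ_k η_k e_k′(x)| ≤ √34 · M₁ · (Σ_k k⁴ η_k²)^{1/2}`. -/
theorem wavelet_derivative_series_bound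
    (jlev : ℕ → ℕ)
    (hlvl : ∀ k : ℕ, 1 ≤ k → (2 ^ jlev k - 1) * 17 ≤ k ∧ k < (2 ^ (jlev k + 1) - 1) * 17)
    (e e' : ℕ → ℝ → ℝ) (I : ℕ → Set ℝ)
    (hsupp : ∀ k : ℕ, 1 ≤ k → ∀ x : ℝ, x ∉ I k → e k x = 0)
    (hoverlap : ∀ (x : ℝ) (j : ℕ) (S : Finset ℕ),
      (∀ k ∈ S, 1 ≤ k ∧ jlev k = j ∧ x ∈ I k) → S.card ≤ 17)
    (M₁ : ℝ) (hM₁ : 0 < M₁)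
    (hderiv : ∀ k : ℕ, 1 ≤ k → ∀ x : ℝ, HasDerivAt (e k) (e' k x) x)
    (hdsup : ∀ k : ℕ, 1 ≤ k → ∀ x : ℝ, |e' k x| ≤ 2 ^ (3 * (jlev k : ℝ) / 2) * M₁)
    (x : ℝ) (η : ℕ → ℝ) (hη0 : η 0 = 0)
    (hsum : Summable fun k : ℕ => (k : ℝ) ^ 4 * η k ^ 2) :
    Summable (fun k : ℕ => |η k * e' k x|) ∧
    |∑' k : ℕ, η k * e' k x| ≤
      Real.sqrt 34 * M₁ * Real.sqrt (∑' k : ℕ, (k : ℝ) ^ 4 * η k ^ 2) := by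
  have hlev (k : ℕ) (hk : 1 ≤ k) : 2 ^ jlev k ≤ k :=
    two_pow_le_of_two_pow_sub_one_mul_le (by norm_num) hk (hlvl k hk).1
  have hmult (y : ℝ) (j : ℕ) (S : Finset ℕ) (hS : ∀ k ∈ S, 1 ≤ k ∧ jlev k = j ∧ e k y ≠ 0) :
      S.card ≤ 17 :=
    hoverlap y j S fun k hk =>
      (hS k hk).imp_right fun h => h.imp_right fun hne => not_imp_comm.1 (hsupp k (hS k hk).1 y) hne
  obtain ⟨hsummable, hle⟩ := wavelet_derivative_series_bound_general (N := 17) hlev hmult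
    (fun k hk => hderiv k hk x) (fun k hk => hdsup k hk x) hη0 (by simpa using hsum)
  have hconst : (2 * (17 : ℕ) : ℝ) = 34 := by norm_num
  simp only [smul_eq_mul, Real.norm_eq_abs, sq_abs, hconst] at hsummable hle
  refine ⟨hsummable, le_trans ?_ hle⟩
  simpa only [Real.norm_eq_abs] using norm_tsum_le_tsum_norm (f := fun k => η k * e' k x) hsummable
end

section
/- For all M, s, L, P₀ > 0 and α > 2 there is a constant C′ > 0, depending only on M, s, L, P₀ and α, with the following property. Assume the dyadic wavelet-type system is orthonormal in L²(ℝ), with ‖e_k‖_∞ ≤ 2^{j_k/2} M, λ(I_k) ≤ 17·2^{−j_k} s, and such that for every k and every level j ≥ j_k at most 18·2^{j − j_k} indices l with j_l = j satisfy I_l ∩ I_k ≠ ∅. Let Z be a real random variable whose Lebesgue density p satisfies ‖p‖_∞ ≤ P₀ and is Lipschitz with constant L. Then for every square-summable real sequence (η_k) with Σ_{k≥1} k^{2α} η_k² ≤ C², and every m of the form m = 17·2^J − 1 (J ∈ ℕ₀): E[ ( Σ_{k > m} η_k e_k(Z) )² ] ≤ C′ · C² · m^{−2α}. -/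
open MeasureTheory

/-!
The bound is Parseval's identity with a weight. Domination of the law of `Z` by `P₀ • ν` reduces
the second moment to `P₀` times the squared `L²(ν)` norm of the tail, which by orthonormality is
`∑_{k > m} η_k²`; since `k ^ (2α) ≥ m ^ (2α)` there, this is at most `C² m ^ (-2α)`.

The series is summed pointwise while Parseval's identity concerns convergence in `L²`. The two sums
agree almost everywhere because the coefficients are absolutely summable: by AM-GM,
`|η_k| ≤ k ^ (2α) η_k² + k ^ (-2α)`, and `2α > 1`.
-/

open scoped ENNReal

section Weights

variable {ι : Type*} {w : ι → ℝ}

lemma summable_abs_of_summable_mul_sq {c : ι → ℝ} (hw : ∀ k, 0 < w k)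
    (hw_inv : Summable fun k => (w k)⁻¹) (hc : Summable fun k => w k * c k ^ 2) :
    Summable fun k => |c k| := by
  refine (hc.add hw_inv).of_nonneg_of_le (fun k => abs_nonneg _) fun k => ?_
  have hwk := (hw k).ne'
  calc |c k| ≤ (w k)⁻¹ * ((w k * |c k|) ^ 2 + 1) :=
        (le_inv_mul_iff₀ (hw k)).2 (by nlinarith [sq_nonneg (w k * |c k| - 1)])
    _ = w k * c k ^ 2 + (w k)⁻¹ := by
        rw [mul_pow, sq_abs]
        field_simp

lemma tsum_subtype_le_tsum_mul_div {f : ι → ℝ} {s : Set ι} {b : ℝ} (hb : 0 < b)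
    (hbw : ∀ k ∈ s, b ≤ w k) (hw : ∀ k, 0 ≤ w k) (hf : ∀ k, 0 ≤ f k)
    (hwf : Summable fun k => w k * f k) :
    ∑' k : s, f k ≤ (∑' k, w k * f k) / b := by
  have hle (k : s) : f k ≤ w k * f k / b := by
    rw [le_div_iff₀' hb]
    exact mul_le_mul_of_nonneg_right (hbw k k.2) (hf k)
  have hwf_div : Summable fun k => w k * f k / b := hwf.div_const b
  have hwf_s : Summable fun k : s => w k * f k / b := hwf_div.subtype s
  calc ∑' k : s, f k
      ≤ ∑' k : s, w k * f k / b :=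
        (hwf_s.of_nonneg_of_le (fun k : s => hf k) hle).tsum_le_tsum hle hwf_s
    _ ≤ ∑' k, w k * f k / b :=
        hwf_div.tsum_subtype_le _ s fun k => div_nonneg (mul_nonneg (hw k) (hf k)) hb.le
    _ = (∑' k, w k * f k) / b := tsum_div_const

lemma tsum_Ioi_sq_le_of_tsum_rpow_mul_sq_le {η : ℕ → ℝ} {a B : ℝ} (ha : 0 ≤ a)
    (hη : Summable fun k : ℕ => (k : ℝ) ^ a * η k ^ 2)
    (hB : ∑' k : ℕ, (k : ℝ) ^ a * η k ^ 2 ≤ B) {m : ℕ} (hm : 0 < m) :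
    ∑' k : Set.Ioi m, η k ^ 2 ≤ B * (m : ℝ) ^ (-a) := by
  have hpow : 0 < (m : ℝ) ^ a := Real.rpow_pos_of_pos (Nat.cast_pos.2 hm) a
  have hmono : ∀ k ∈ Set.Ioi m, (m : ℝ) ^ a ≤ (k : ℝ) ^ a := fun k hk =>
    Real.rpow_le_rpow m.cast_nonneg (Nat.cast_le.2 (Set.mem_Ioi.1 hk).le) ha
  rw [Real.rpow_neg m.cast_nonneg, ← div_eq_mul_inv]
  exact (tsum_subtype_le_tsum_mul_div hpow hmono (fun k => by positivity) (fun k => sq_nonneg _)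
    hη).trans (div_le_div_of_nonneg_right hB hpow.le)

lemma summable_Ioi_abs_of_summable_rpow_mul_sq {η : ℕ → ℝ} {a : ℝ} (ha : 1 < a)
    (hη : Summable fun k : ℕ => (k : ℝ) ^ a * η k ^ 2) (m : ℕ) :
    Summable fun k : Set.Ioi m => |η k| :=
  summable_abs_of_summable_mul_sq
    (fun k => Real.rpow_pos_of_pos (Nat.cast_pos.2 ((Nat.zero_le m).trans_lt k.2)) a)
    ((Real.summable_nat_rpow_inv.2 ha).subtype _) (hη.subtype _)

end Weights

lemma norm_sq_tsum_smul_of_orthonormal {𝕜 E ι : Type*} [RCLike 𝕜] [NormedAddCommGroup E]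
    [InnerProductSpace 𝕜 E] {v : ι → E} (hv : Orthonormal 𝕜 v) {c : ι → 𝕜}
    (hc : Summable fun k => c k • v k) :
    ‖∑' k, c k • v k‖ ^ 2 = ∑' k, ‖c k‖ ^ 2 := by
  have hfinite (T : Finset ι) : ‖∑ k ∈ T, c k • v k‖ ^ 2 = ∑ k ∈ T, ‖c k‖ ^ 2 := by
    simpa using hv.orthogonalFamily.norm_sum c T
  have hlim : HasSum (fun k => ‖c k‖ ^ 2) (‖∑' k, c k • v k‖ ^ 2) := by
    simpa only [HasSum, hfinite] using hc.hasSum.norm.pow 2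
  exact hlim.tsum_eq.symm

section L2

variable {X ι : Type*} [MeasurableSpace X] {ν : Measure X}

lemma memLp_two_of_integral_mul_self_ne_zero {f : X → ℝ} (hf : AEStronglyMeasurable f ν)
    (hff : ∫ x, f x * f x ∂ν ≠ 0) : MemLp f 2 ν := by
  simp only [memLp_two_iff_integrable_sq hf, sq]
  exact Integrable.of_integral_ne_zero hff

lemma orthonormal_toLp_of_integral_mul_eq_ite [DecidableEq ι] {e : ι → X → ℝ}
    (he : ∀ k, MemLp (e k) 2 ν)
    (horth : ∀ k l, ∫ x, e k x * e l x ∂ν = if k = l then 1 else 0) :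
    Orthonormal ℝ fun k => (he k).toLp := by
  refine orthonormal_iff_ite.2 fun k l => ?_
  rw [L2.inner_def, ← horth k l]
  refine integral_congr_ae ?_
  filter_upwards [(he k).coeFn_toLp, (he l).coeFn_toLp] with x hk hl
  simp [hk, hl, mul_comm]

lemma lintegral_sq_eq_norm_sq (f : Lp ℝ 2 ν) :
    ∫⁻ x, ENNReal.ofReal (f x ^ 2) ∂ν = ENNReal.ofReal (‖f‖ ^ 2) := by
  have hnorm : ‖f‖ ^ 2 = ∫ x, f x ^ 2 ∂ν := by
    rw [← real_inner_self_eq_norm_sq, L2.inner_def]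
    simp only [real_inner_self_eq_norm_sq, Real.norm_eq_abs, sq_abs]
  rw [hnorm, ofReal_integral_eq_lintegral_ofReal (Lp.memLp f).integrable_sq
    (ae_of_all _ fun x => sq_nonneg (f x))]

variable [Countable ι]

lemma ae_hasSum_smul_coeFn_tsum_smul_toLp {𝕜 E : Type*} [NormedField 𝕜] [NormedAddCommGroup E]
    [NormedSpace 𝕜 E] [CompleteSpace E] {p : ℝ≥0∞} [Fact (1 ≤ p)] {e : ι → X → E} {c : ι → 𝕜}
    {B : ℝ} (he : ∀ k, MemLp (e k) p ν) (hB : ∀ k, ‖(he k).toLp‖ ≤ B)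
    (hc : Summable fun k => ‖c k‖) :
    ∀ᵐ x ∂ν, HasSum (fun k => c k • e k x) ((∑' k, c k • (he k).toLp : Lp E p ν) x) := by
  have hnorm : ∑' k, ‖c k • (he k).toLp‖ₑ ≠ ∞ := by
    refine tsum_enorm_ne_top_iff_summable_norm.2 <|
      (hc.mul_right B).of_nonneg_of_le (fun k => norm_nonneg _) fun k => ?_
    rw [norm_smul]
    exact mul_le_mul_of_nonneg_left (hB k) (norm_nonneg _)
  have hcoe : ∀ᵐ x ∂ν, ∀ k, (c k • (he k).toLp : Lp E p ν) x = c k • e k x := by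
    refine ae_all_iff.2 fun k => ?_
    filter_upwards [Lp.coeFn_smul (c k) (he k).toLp, (he k).coeFn_toLp] with x hsmul htoLp
    rw [hsmul, Pi.smul_apply, htoLp]
  filter_upwards [Lp.hasSum_coeFn_tsum hnorm, hcoe] with x hx hcoe_x
  simpa only [hcoe_x] using hx

variable {e : ι → X → ℝ} {c : ι → ℝ}

lemma ae_hasSum_mul_of_orthonormal (he : ∀ k, MemLp (e k) 2 ν)
    (horth : Orthonormal ℝ fun k => (he k).toLp) (hc : Summable fun k => |c k|) :
    ∀ᵐ x ∂ν, HasSum (fun k => c k * e k x) ((∑' k, c k • (he k).toLp : Lp ℝ 2 ν) x) := by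
  have hnorm (k : ι) : ‖(he k).toLp‖ ≤ 1 := (horth.norm_eq_one k).le
  simpa only [smul_eq_mul] using ae_hasSum_smul_coeFn_tsum_smul_toLp (c := c) he hnorm hc

lemma lintegral_sq_tsum_mul_of_orthonormal (he : ∀ k, MemLp (e k) 2 ν)
    (horth : Orthonormal ℝ fun k => (he k).toLp) (hc : Summable fun k => |c k|) :
    ∫⁻ x, ENNReal.ofReal ((∑' k, c k * e k x) ^ 2) ∂ν = ENNReal.ofReal (∑' k, c k ^ 2) := by
  have hL2 : Summable fun k => c k • (he k).toLp := by
    refine Summable.of_norm ?_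
    simpa only [norm_smul, horth.norm_eq_one, mul_one, Real.norm_eq_abs] using hc
  calc ∫⁻ x, ENNReal.ofReal ((∑' k, c k * e k x) ^ 2) ∂ν
      = ∫⁻ x, ENNReal.ofReal ((∑' k, c k • (he k).toLp : Lp ℝ 2 ν) x ^ 2) ∂ν :=
        lintegral_congr_ae <| (ae_hasSum_mul_of_orthonormal he horth hc).mono fun x hx => by
          simp only [hx.tsum_eq]
    _ = ENNReal.ofReal (∑' k, c k ^ 2) := by
        simp only [lintegral_sq_eq_norm_sq, norm_sq_tsum_smul_of_orthonormal horth hL2,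
          Real.norm_eq_abs, sq_abs]

end L2

section Law

variable {Ω X : Type*} [MeasurableSpace Ω] [MeasurableSpace X] {P : Measure Ω} {ν : Measure X}
  {Z : Ω → X}

lemma withDensity_ofReal_le_smul {p : X → ℝ} {b : ℝ} (hp : ∀ t, p t ≤ b) :
    ν.withDensity (fun t => ENNReal.ofReal (p t)) ≤ ENNReal.ofReal b • ν := by
  rw [← withDensity_const]
  exact withDensity_mono (ae_of_all _ fun t => ENNReal.ofReal_le_ofReal (hp t))

lemma lintegral_comp_le_of_map_le_smul (hZ : Measurable Z) {b : ℝ≥0∞} (hlaw : P.map Z ≤ b • ν)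
    {g : X → ℝ≥0∞} (hg : Measurable g) :
    ∫⁻ ω, g (Z ω) ∂P ≤ b * ∫⁻ x, g x ∂ν := by
  rw [← lintegral_map hg hZ, ← smul_eq_mul, ← lintegral_smul_measure]
  exact lintegral_mono' hlaw le_rfl

theorem wavelet_tail_variance_bound_general (hZ : Measurable Z) {P₀ α C : ℝ}
    (hlaw : P.map Z ≤ ENNReal.ofReal P₀ • ν) (hα : 1 / 2 < α)
    {e : ℕ → X → ℝ} (he : ∀ k, Measurable (e k))
    (horth : ∀ k l : ℕ, 1 ≤ k → 1 ≤ l → ∫ x, e k x * e l x ∂ν = if k = l then 1 else 0)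
    {η : ℕ → ℝ} (hη : Summable fun k : ℕ => (k : ℝ) ^ (2 * α) * η k ^ 2)
    (hC : ∑' k : ℕ, (k : ℝ) ^ (2 * α) * η k ^ 2 ≤ C ^ 2) {m : ℕ} (hm : 0 < m) :
    (∀ᵐ ω ∂P, Summable fun k : ℕ => if m < k then η k * e k (Z ω) else 0) ∧
      ∫⁻ ω, ENNReal.ofReal ((∑' k : ℕ, if m < k then η k * e k (Z ω) else 0) ^ 2) ∂P
        ≤ ENNReal.ofReal (P₀ * C ^ 2 * (m : ℝ) ^ (-(2 * α))) := by
  have horth_tail (k l : Set.Ioi m) : ∫ x, e k x * e l x ∂ν = if k = l then 1 else 0 := by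
    rw [horth k l (hm.trans k.2) (hm.trans l.2)]
    simp only [Subtype.ext_iff]
  have hmem (k : Set.Ioi m) : MemLp (e k) 2 ν :=
    memLp_two_of_integral_mul_self_ne_zero (he k).aestronglyMeasurable (by simp [horth_tail])
  have horth_Lp := orthonormal_toLp_of_integral_mul_eq_ite hmem horth_tail
  have habs := summable_Ioi_abs_of_summable_rpow_mul_sq (by linarith) hη m
  have hae : ∀ᵐ x ∂P.map Z, Summable fun k : Set.Ioi m => η k * e k x :=
    (Measure.absolutelyContinuous_of_le_smul hlaw).ae_le <|
      (ae_hasSum_mul_of_orthonormal hmem horth_Lp habs).mono fun _ hx => hx.summable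
  have hite (ω : Ω) : (fun k : ℕ => if m < k then η k * e k (Z ω) else 0)
      = (Set.Ioi m).indicator fun k => η k * e k (Z ω) := by
    ext k
    simp only [Set.indicator_apply, Set.mem_Ioi]
  simp only [hite, ← summable_subtype_iff_indicator, ← tsum_subtype]
  refine ⟨ae_of_ae_map hZ.aemeasurable hae, ?_⟩
  calc ∫⁻ ω, ENNReal.ofReal ((∑' k : Set.Ioi m, η k * e k (Z ω)) ^ 2) ∂P
      ≤ ENNReal.ofReal P₀ * ∫⁻ x, ENNReal.ofReal ((∑' k : Set.Ioi m, η k * e k x) ^ 2) ∂ν :=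
        lintegral_comp_le_of_map_le_smul hZ hlaw
          (g := fun x => ENNReal.ofReal ((∑' k : Set.Ioi m, η k * e k x) ^ 2)) (by fun_prop)
    _ = ENNReal.ofReal P₀ * ENNReal.ofReal (∑' k : Set.Ioi m, η k ^ 2) := by
        rw [lintegral_sq_tsum_mul_of_orthonormal hmem horth_Lp habs]
    _ ≤ ENNReal.ofReal P₀ * ENNReal.ofReal (C ^ 2 * (m : ℝ) ^ (-(2 * α))) := by
        gcongr
        exact tsum_Ioi_sq_le_of_tsum_rpow_mul_sq_le (by linarith) hη hC hm
    _ = ENNReal.ofReal (P₀ * C ^ 2 * (m : ℝ) ^ (-(2 * α))) := by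
        rw [mul_assoc, ← ENNReal.ofReal_mul' (by positivity)]

end Law

/-- a uniform bound on the variance of wavelet tail sums.  For all
`M, s, L, P₀ > 0` and `α > 2` there is `C′ > 0`, depending only on these constants, such that
for every orthonormal dyadic wavelet-type system (with `‖e_k‖_∞ ≤ 2^{j_k/2}M`,
`λ(I_k) ≤ 17·2^{−j_k}s` and the stated overlap counts), every random variable `Z` whose
Lebesgue density is bounded by `P₀` and Lipschitz with constant `L`, every coefficient sequence
with `Σ_k k^{2α} η_k² ≤ C²`, and every `m = 17·2^J − 1`:
`E[(Σ_{k>m} η_k e_k(Z))²] ≤ C′ C² m^{−2α}`. -/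
theorem wavelet_tail_variance_bound
    (M s L P₀ α : ℝ) (hM : 0 < M) (hs : 0 < s) (hL : 0 < L) (hP₀ : 0 < P₀) (hα : 2 < α) :
    ∃ C' : ℝ, 0 < C' ∧
    ∀ (jlev : ℕ → ℕ),
      (∀ k : ℕ, 1 ≤ k → (2 ^ jlev k - 1) * 17 ≤ k ∧ k < (2 ^ (jlev k + 1) - 1) * 17) →
    ∀ (e : ℕ → ℝ → ℝ) (I : ℕ → Set ℝ),
      (∀ k, Measurable (e k)) →
      (∀ k : ℕ, 1 ≤ k → ∀ x : ℝ, x ∉ I k → e k x = 0) →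
      (∀ (x : ℝ) (j : ℕ) (S : Finset ℕ),
        (∀ k ∈ S, 1 ≤ k ∧ jlev k = j ∧ x ∈ I k) → S.card ≤ 17) →
      (∀ k l : ℕ, 1 ≤ k → 1 ≤ l →
        ∫ x : ℝ, e k x * e l x = if k = l then 1 else 0) →
      (∀ k : ℕ, 1 ≤ k → ∀ x : ℝ, |e k x| ≤ 2 ^ ((jlev k : ℝ) / 2) * M) →
      (∀ k : ℕ, 1 ≤ k → volume (I k) ≤ ENNReal.ofReal (17 * 2 ^ (-(jlev k : ℝ)) * s)) →
      (∀ k : ℕ, 1 ≤ k → ∀ j : ℕ, jlev k ≤ j → ∀ S : Finset ℕ,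
        (∀ l ∈ S, 1 ≤ l ∧ jlev l = j ∧ (I l ∩ I k).Nonempty) →
        S.card ≤ 18 * 2 ^ (j - jlev k)) →
    ∀ (Ω : Type) [MeasurableSpace Ω] (P : Measure Ω), IsProbabilityMeasure P →
    ∀ (Z : Ω → ℝ), Measurable Z →
    ∀ (pZ : ℝ → ℝ), Measurable pZ → (∀ t, 0 ≤ pZ t) →
      Measure.map Z P = volume.withDensity (fun t => ENNReal.ofReal (pZ t)) →
      (∀ t, pZ t ≤ P₀) → (∀ t u, |pZ t - pZ u| ≤ L * |t - u|) →
    ∀ (η : ℕ → ℝ) (C : ℝ),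
      Summable (fun k : ℕ => (k : ℝ) ^ (2 * α) * η k ^ 2) →
      (∑' k : ℕ, (k : ℝ) ^ (2 * α) * η k ^ 2) ≤ C ^ 2 →
    ∀ (J m : ℕ), m = 17 * 2 ^ J - 1 →
      ∫⁻ ω, ENNReal.ofReal ((∑' k : ℕ, if m < k then η k * e k (Z ω) else 0) ^ 2) ∂P
        ≤ ENNReal.ofReal (C' * C ^ 2 * (m : ℝ) ^ (-(2 * α))) := by
  refine ⟨P₀, hP₀, ?_⟩
  intro _ _ e _ he _ _ horth _ _ _ Ω _ P _ Z hZ pZ _ _ hlaw hpZ _ η C hη hC J m hm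
  have hm_pos : 0 < m := by have := Nat.one_le_two_pow (n := J); omega
  exact (wavelet_tail_variance_bound_general hZ (hlaw.trans_le (withDensity_ofReal_le_smul hpZ))
    (by linarith) he horth hη hC hm_pos).2
end

section
/- Let ρ > 0, c > 0 and α, β ∈ ℝ with α² + β² = 1 and β > 0. Then for every differentiable f : ℝ → ℝ with f′(t) ≥ c for all t ∈ ℝ, and every Lebesgue-measurable g : ℝ → ℝ, the set A = { (x, y) ∈ ℝ² : x² + y² ≤ ρ² and |f(αx + βy) − g(x)| > ρβc/2 } satisfies λ₂(A) ≥ λ₂( { (x, y) ∈ ℝ² : x² + y² ≤ ρ², |y| > ρ/2 } ) ≥ π ρ² / 16. -/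
open MeasureTheory

/-!
Slice the disc vertically. On each slice `y ↦ f (α * x + β * y)` expands distances by at least
`|β| * c`, so the points where it is within `ρ * |β| * c / 2` of the single value `g x` form a set
of length at most `ρ`. Among all sets of length at most `ρ`, the centred interval `|y| ≤ ρ / 2`
leaves the least of the chord when removed, since it is either contained in the chord or contains
it. Integrating over `x` compares the exceptional set with the two caps `ρ / 2 < |y|`, and one of
these already contains a rectangle of sides `6 * ρ / 5` and `3 * ρ / 10`.
-/

section Slicing

variable {Ω Y : Type*} [MeasurableSpace Ω] [MeasurableSpace Y]

lemma lintegral_measure_prodMk_preimage_le_prod (μ : Measure Ω) (ν : Measure Y) [SFinite ν]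
    (s : Set (Ω × Y)) : ∫⁻ x, ν (Prod.mk x ⁻¹' s) ∂μ ≤ μ.prod ν s :=
  calc ∫⁻ x, ν (Prod.mk x ⁻¹' s) ∂μ
      ≤ ∫⁻ x, ν (Prod.mk x ⁻¹' toMeasurable (μ.prod ν) s) ∂μ :=
        lintegral_mono fun _ => measure_mono (Set.preimage_mono (subset_toMeasurable _ _))
    _ = μ.prod ν (toMeasurable (μ.prod ν) s) :=
        (Measure.prod_apply (measurableSet_toMeasurable _ _)).symm
    _ = μ.prod ν s := measure_toMeasurable s

lemma prod_le_prod_of_forall_section_le (μ : Measure Ω) (ν : Measure Y) [SFinite ν]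
    {s t : Set (Ω × Y)} (hs : MeasurableSet s)
    (h : ∀ x, ν (Prod.mk x ⁻¹' s) ≤ ν (Prod.mk x ⁻¹' t)) : μ.prod ν s ≤ μ.prod ν t :=
  calc μ.prod ν s ≤ ∫⁻ x, ν (Prod.mk x ⁻¹' s) ∂μ := Measure.prod_apply_le hs
    _ ≤ ∫⁻ x, ν (Prod.mk x ⁻¹' t) ∂μ := lintegral_mono h
    _ ≤ μ.prod ν t := lintegral_measure_prodMk_preimage_le_prod μ ν t

lemma measure_sdiff_le_measure_sdiff {ν : Measure Y} {s t u : Set Y} (hst : s ⊆ t ∨ t ⊆ s)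
    (ht : NullMeasurableSet t ν) (ht' : ν t ≠ ⊤) (hut : ν u ≤ ν t) : ν (s \ t) ≤ ν (s \ u) := by
  rcases hst with hst | hts
  · simp [Set.sdiff_eq_empty.2 hst]
  · calc ν (s \ t) = ν s - ν t := measure_sdiff hts ht ht'
      _ ≤ ν s - ν u := tsub_le_tsub_left hut _
      _ ≤ ν (s \ u) := le_measure_sdiff

end Slicing

lemma subset_closedBall_or_closedBall_subset {E : Type*} [SeminormedAddCommGroup E] {s : Set E}
    (hs : ∀ y ∈ s, ∀ z, ‖z‖ ≤ ‖y‖ → z ∈ s) (r : ℝ) :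
    s ⊆ Metric.closedBall 0 r ∨ Metric.closedBall 0 r ⊆ s := by
  refine or_iff_not_imp_left.2 fun h => ?_
  obtain ⟨y, hys, hy⟩ := Set.not_subset.1 h
  rw [mem_closedBall_zero_iff, not_le] at hy
  exact fun z hz => hs y hys z ((mem_closedBall_zero_iff.1 hz).trans hy.le)

section Expanding

variable {X : Type*} [PseudoMetricSpace X] {c : ℝ}

lemma mul_abs_sub_le_dist_of_le_deriv {f : ℝ → ℝ} (hf : Differentiable ℝ f)
    (hf' : ∀ t, c ≤ deriv f t) (s t : ℝ) : c * |s - t| ≤ dist (f s) (f t) := by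
  wlog hts : t ≤ s generalizing s t
  · rw [abs_sub_comm, dist_comm]
    exact this t s (le_of_not_ge hts)
  calc c * |s - t| = c * (s - t) := by rw [abs_of_nonneg (sub_nonneg.2 hts)]
    _ ≤ f s - f t := mul_sub_le_image_sub_of_le_deriv hf hf' hts
    _ ≤ dist (f s) (f t) := le_abs_self _

lemma volume_preimage_closedBall_le (hc : 0 < c) {f : ℝ → X}
    (hf : ∀ s t, c * |s - t| ≤ dist (f s) (f t)) (p : X) (r : ℝ) :
    volume (f ⁻¹' Metric.closedBall p (c * r)) ≤ ENNReal.ofReal (2 * r) := by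
  refine (Real.volume_le_diam _).trans (Metric.ediam_le fun s hs t ht => ?_)
  have hst : c * |s - t| ≤ c * (2 * r) :=
    calc c * |s - t| ≤ dist (f s) (f t) := hf s t
      _ ≤ c * r + c * r := (dist_triangle_right _ _ p).trans (add_le_add hs ht)
      _ = c * (2 * r) := by ring
  rw [edist_dist]
  exact ENNReal.ofReal_le_ofReal (le_of_mul_le_mul_left hst hc)

lemma volume_outside_strip_le_volume_lt_dist (hc : 0 < c) {f : ℝ → X}
    (hf : ∀ s t, c * |s - t| ≤ dist (f s) (f t)) {s : Set ℝ}
    (hs : ∀ y ∈ s, ∀ z, |z| ≤ |y| → z ∈ s) (p : X) (r : ℝ) :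
    volume {y | y ∈ s ∧ r < |y|} ≤ volume {y | y ∈ s ∧ c * r < dist (f y) p} := by
  have hcentred : {y | y ∈ s ∧ r < |y|} = s \ Metric.closedBall 0 r := by
    ext y
    simp only [Set.mem_ofPred_eq, Set.mem_sdiff, mem_closedBall_zero_iff, Real.norm_eq_abs, not_le]
  have hfar : {y | y ∈ s ∧ c * r < dist (f y) p} = s \ f ⁻¹' Metric.closedBall p (c * r) := by
    ext y
    simp only [Set.mem_ofPred_eq, Set.mem_sdiff, Set.mem_preimage, Metric.mem_closedBall, not_le]
  rw [hcentred, hfar]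
  refine measure_sdiff_le_measure_sdiff (subset_closedBall_or_closedBall_subset hs r)
    measurableSet_closedBall.nullMeasurableSet measure_closedBall_lt_top.ne ?_
  rw [Real.volume_closedBall]
  exact volume_preimage_closedBall_le hc hf p r

lemma prod_outside_strip_le_prod_lt_dist {Ω : Type*} [MeasurableSpace Ω] (μ : Measure Ω)
    (hc : 0 < c) {F : Ω → ℝ → X} (hF : ∀ x s t, c * |s - t| ≤ dist (F x s) (F x t))
    {D : Set (Ω × ℝ)} (hD : MeasurableSet D)
    (hDsymm : ∀ x y z, (x, y) ∈ D → |z| ≤ |y| → (x, z) ∈ D) (g : Ω → X) (r : ℝ) :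
    μ.prod volume {q | q ∈ D ∧ r < |q.2|} ≤
      μ.prod volume {q | q ∈ D ∧ c * r < dist (F q.1 q.2) (g q.1)} :=
  prod_le_prod_of_forall_section_le μ volume
    (hD.inter (measurableSet_lt measurable_const measurable_snd.abs))
    fun x => volume_outside_strip_le_volume_lt_dist hc (hF x)
      (s := Prod.mk x ⁻¹' D) (fun y hy z => hDsymm x y z hy) (g x) r

end Expanding

lemma volume_disc_outside_strip_le_volume_lt_dist {X : Type*} [PseudoMetricSpace X] {c : ℝ}
    (hc : 0 < c) (α : ℝ) {β : ℝ} (hβ : β ≠ 0) {f : ℝ → X}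
    (hf : ∀ s t, c * |s - t| ≤ dist (f s) (f t)) (g : ℝ → X) (ρ r : ℝ) :
    volume {q : ℝ × ℝ | q.1 ^ 2 + q.2 ^ 2 ≤ ρ ^ 2 ∧ r < |q.2|} ≤
      volume {q : ℝ × ℝ | q.1 ^ 2 + q.2 ^ 2 ≤ ρ ^ 2 ∧
        c * |β| * r < dist (f (α * q.1 + β * q.2)) (g q.1)} := by
  have hslice (x s t : ℝ) :
      c * |β| * |s - t| ≤ dist (f (α * x + β * s)) (f (α * x + β * t)) :=
    calc c * |β| * |s - t| = c * |(α * x + β * s) - (α * x + β * t)| := by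
          rw [add_sub_add_left_eq_sub, ← mul_sub, abs_mul, mul_assoc]
      _ ≤ dist (f (α * x + β * s)) (f (α * x + β * t)) := hf _ _
  have hdisc : MeasurableSet {q : ℝ × ℝ | q.1 ^ 2 + q.2 ^ 2 ≤ ρ ^ 2} :=
    measurableSet_le (by fun_prop) measurable_const
  have hsymm (x y z : ℝ) (hy : x ^ 2 + y ^ 2 ≤ ρ ^ 2) (hzy : |z| ≤ |y|) :
      x ^ 2 + z ^ 2 ≤ ρ ^ 2 := by
    linarith [sq_le_sq.2 hzy]
  exact prod_outside_strip_le_prod_lt_dist volume (mul_pos hc (abs_pos.2 hβ)) hslice hdisc hsymm g r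

lemma ofReal_le_volume_disc_outside_strip {ρ : ℝ} (hρ : 0 ≤ ρ) :
    ENNReal.ofReal (Real.pi * ρ ^ 2 / 16) ≤
      volume {q : ℝ × ℝ | q.1 ^ 2 + q.2 ^ 2 ≤ ρ ^ 2 ∧ ρ / 2 < |q.2|} := by
  have hrect : Set.Icc (-(3 / 5 * ρ)) (3 / 5 * ρ) ×ˢ Set.Ioc (ρ / 2) (4 / 5 * ρ) ⊆
      {q : ℝ × ℝ | q.1 ^ 2 + q.2 ^ 2 ≤ ρ ^ 2 ∧ ρ / 2 < |q.2|} := by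
    rintro ⟨x, y⟩ ⟨hx, hy⟩
    have hx2 : x ^ 2 ≤ (3 / 5 * ρ) ^ 2 := sq_le_sq' hx.1 hx.2
    have hy2 : y ^ 2 ≤ (4 / 5 * ρ) ^ 2 := sq_le_sq' (by linarith [hy.1]) hy.2
    exact ⟨by dsimp only; linarith, hy.1.trans_le (le_abs_self y)⟩
  have harea : Real.pi * ρ ^ 2 / 16 ≤ (6 / 5 * ρ) * (3 / 10 * ρ) := by
    nlinarith [Real.pi_lt_four, sq_nonneg ρ]
  calc ENNReal.ofReal (Real.pi * ρ ^ 2 / 16)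
      ≤ ENNReal.ofReal ((6 / 5 * ρ) * (3 / 10 * ρ)) := ENNReal.ofReal_le_ofReal harea
    _ = volume (Set.Icc (-(3 / 5 * ρ)) (3 / 5 * ρ) ×ˢ Set.Ioc (ρ / 2) (4 / 5 * ρ)) := by
        rw [Measure.volume_eq_prod, Measure.prod_prod, Real.volume_Icc, Real.volume_Ioc,
          ← ENNReal.ofReal_mul (by linarith)]
        ring_nf
    _ ≤ volume {q : ℝ × ℝ | q.1 ^ 2 + q.2 ^ 2 ≤ ρ ^ 2 ∧ ρ / 2 < |q.2|} := measure_mono hrect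

theorem geometric_small_ball_general {X : Type*} [PseudoMetricSpace X] {ρ c : ℝ} (hρ : 0 ≤ ρ)
    (hc : 0 < c) (α : ℝ) {β : ℝ} (hβ : β ≠ 0) {f : ℝ → X}
    (hf : ∀ s t, c * |s - t| ≤ dist (f s) (f t)) (g : ℝ → X) :
    volume {q : ℝ × ℝ | q.1 ^ 2 + q.2 ^ 2 ≤ ρ ^ 2 ∧ ρ / 2 < |q.2|}
      ≤ volume {q : ℝ × ℝ | q.1 ^ 2 + q.2 ^ 2 ≤ ρ ^ 2 ∧
          ρ * |β| * c / 2 < dist (f (α * q.1 + β * q.2)) (g q.1)} ∧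
    ENNReal.ofReal (Real.pi * ρ ^ 2 / 16) ≤
      volume {q : ℝ × ℝ | q.1 ^ 2 + q.2 ^ 2 ≤ ρ ^ 2 ∧ ρ / 2 < |q.2|} := by
  have hthreshold : ρ * |β| * c / 2 = c * |β| * (ρ / 2) := by ring
  rw [hthreshold]
  exact ⟨volume_disc_outside_strip_le_volume_lt_dist hc α hβ hf g ρ (ρ / 2),
    ofReal_le_volume_disc_outside_strip hρ⟩

/-- geometric small-ball lemma: for `ρ, c > 0` and `α² + β² = 1` with `β > 0`,
for every differentiable `f : ℝ → ℝ` with `f′ ≥ c` and every measurable `g : ℝ → ℝ`, the set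
`A = {(x,y) : x² + y² ≤ ρ², |f(αx + βy) − g(x)| > ρβc/2}` satisfies
`λ₂(A) ≥ λ₂({(x,y) : x² + y² ≤ ρ², |y| > ρ/2}) ≥ πρ²/16`. -/
theorem geometric_small_ball
    (ρ c : ℝ) (hρ : 0 < ρ) (hc : 0 < c)
    (α β : ℝ) (hαβ : α ^ 2 + β ^ 2 = 1) (hβ : 0 < β)
    (f : ℝ → ℝ) (hf : Differentiable ℝ f) (hf' : ∀ t : ℝ, c ≤ deriv f t)
    (g : ℝ → ℝ) (hg : Measurable g) :
    volume {q : ℝ × ℝ | q.1 ^ 2 + q.2 ^ 2 ≤ ρ ^ 2 ∧ ρ / 2 < |q.2|}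
      ≤ volume {q : ℝ × ℝ | q.1 ^ 2 + q.2 ^ 2 ≤ ρ ^ 2 ∧
          ρ * β * c / 2 < |f (α * q.1 + β * q.2) - g q.1|} ∧
    ENNReal.ofReal (Real.pi * ρ ^ 2 / 16) ≤
      volume {q : ℝ × ℝ | q.1 ^ 2 + q.2 ^ 2 ≤ ρ ^ 2 ∧ ρ / 2 < |q.2|} := by
  simpa only [abs_of_pos hβ, Real.dist_eq] using geometric_small_ball_general hρ.le hc α hβ.ne'
    (mul_abs_sub_le_dist_of_le_deriv hf hf') g
end

section
/- Let p ≥ 2, s, h > 0, c > 0, and let X be a random vector in ℝ^p with a Lebesgue density p_X satisfying p_X(z) ≥ c for all z in the closed ball of radius s + h around the origin. Then for every unit vector θ ∈ ℝ^p, the real random variable Xᵀθ has a Lebesgue density p_θ satisfying p_θ(t) ≥ c · λ_{p−1}(B_h) for Lebesgue-almost every t ∈ [−s, s], where λ_{p−1}(B_h) denotes the (p−1)-dimensional Lebesgue measure of the (p−1)-dimensional closed ball of radius h. -/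
open MeasureTheory

/-- The Euclidean norm of a vector in `ℝ^d`. -/
noncomputable def eNorm {d : ℕ} (v : Fin d → ℝ) : ℝ :=
  Real.sqrt (∑ j, v j ^ 2)

/-!
By Fubini in the orthogonal splitting `E = ℝθ ⊕ θᗮ`, the density of `⟪θ, X⟫` at `t` is the integral
of the density of `X` over the hyperplane `tθ + θᗮ`. For `|t| ≤ s` this hyperplane contains the
translate by `tθ` of the ball of radius `h` in `θᗮ`. By the triangle inequality the translate lies
in the ball of radius `s + h`, where the density of `X` is at least `c`.
-/

open Metric Module WithLp
open scoped ENNReal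

section WithDensity

variable {α β : Type*} [MeasurableSpace α] [MeasurableSpace β] {μ : Measure α} {ν : Measure β}

theorem ae_lt_top_of_isFiniteMeasure_withDensity {f : α → ℝ≥0∞} (hf : AEMeasurable f μ)
    [IsFiniteMeasure (μ.withDensity f)] : ∀ᵐ x ∂μ, f x < ∞ := by
  refine ae_lt_top' hf ?_
  rw [← setLIntegral_univ, ← withDensity_apply _ MeasurableSet.univ]
  exact measure_ne_top _ _

theorem map_withDensity_comp {e : α → β} (he : MeasurePreserving e μ ν) {f : β → ℝ≥0∞}
    (hf : AEMeasurable f ν) : (μ.withDensity (f ∘ e)).map e = ν.withDensity f := by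
  ext A hA
  have heA := he.restrict_preimage hA
  rw [Measure.map_apply he.measurable hA, withDensity_apply _ (he.measurable hA),
    withDensity_apply _ hA, ← heA.map_eq,
    lintegral_map' (heA.map_eq ▸ hf.restrict) heA.aemeasurable]
  rfl

theorem map_fst_withDensity_prod [SFinite μ] [SFinite ν] {f : α × β → ℝ≥0∞}
    (hf : AEMeasurable f (μ.prod ν)) :
    ((μ.prod ν).withDensity f).map Prod.fst = μ.withDensity fun x => ∫⁻ y, f (x, y) ∂ν := by
  ext A hA
  have hprod : (μ.restrict A).prod ν = (μ.prod ν).restrict (Prod.fst ⁻¹' A) := by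
    rw [← Set.prod_univ, ← Measure.prod_restrict, Measure.restrict_univ]
  rw [Measure.map_apply measurable_fst hA, withDensity_apply _ (measurable_fst hA),
    withDensity_apply _ hA, ← hprod, lintegral_prod _ (hprod ▸ hf.restrict)]

end WithDensity

section RadonTransform

variable {E : Type*} [NormedAddCommGroup E] [InnerProductSpace ℝ E]

theorem inner_smul_add_orthogonal {θ : E} (hθ : ‖θ‖ = 1) (t : ℝ) (y : (ℝ ∙ θ)ᗮ) :
    inner ℝ θ (t • θ + (y : E)) = t := by
  rw [inner_add_right, inner_smul_right, real_inner_self_eq_norm_sq, hθ,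
    Submodule.mem_orthogonal_singleton_iff_inner_right.mp y.2]
  ring

variable [FiniteDimensional ℝ E] [MeasurableSpace E] [BorelSpace E]

/-- The Radon transform of `f`, as a function of the height `t` of the hyperplane
`{z | ⟪θ, z⟫ = t}` over which `f` is integrated. The hyperplane is parametrized by `θᗮ`, so this is
the usual notion when `θ` is a unit vector. -/
noncomputable def radonTransform (f : E → ℝ≥0∞) (θ : E) (t : ℝ) : ℝ≥0∞ :=
  ∫⁻ y : (ℝ ∙ θ)ᗮ, f (t • θ + y)

theorem measurable_radonTransform {f : E → ℝ≥0∞} (hf : Measurable f) (θ : E) :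
    Measurable (radonTransform f θ) :=
  Measurable.lintegral_prod_right' (f := fun x : ℝ × (ℝ ∙ θ)ᗮ => f (x.1 • θ + x.2))
    (hf.comp (by fun_prop))

theorem measurePreserving_smul_add_orthogonal {θ : E} (hθ : ‖θ‖ = 1) :
    MeasurePreserving fun x : ℝ × (ℝ ∙ θ)ᗮ => x.1 • θ + (x.2 : E) :=
  (ℝ ∙ θ).orthogonalDecomposition.symm.measurePreserving.comp <|
    (WithLp.volume_preserving_toLp (ℝ ∙ θ) (ℝ ∙ θ)ᗮ).comp <|
      (LinearIsometryEquiv.toSpanUnitSingleton θ hθ).measurePreserving.prod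
        (MeasurePreserving.id volume)

theorem map_inner_withDensity {f : E → ℝ≥0∞} (hf : Measurable f) {θ : E} (hθ : ‖θ‖ = 1) :
    (volume.withDensity f).map (inner ℝ θ) = volume.withDensity (radonTransform f θ) := by
  have he := measurePreserving_smul_add_orthogonal hθ
  rw [← map_withDensity_comp he hf.aemeasurable, Measure.map_map (by fun_prop) he.measurable]
  have hfst : (inner ℝ θ ∘ fun x : ℝ × (ℝ ∙ θ)ᗮ => x.1 • θ + (x.2 : E)) = Prod.fst :=
    funext fun x => inner_smul_add_orthogonal hθ x.1 x.2
  rw [hfst]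
  exact map_fst_withDensity_prod (hf.comp he.measurable).aemeasurable

theorem mul_volume_closedBall_le_radonTransform {f : E → ℝ≥0∞} {c : ℝ≥0∞} {s h : ℝ}
    (hf : ∀ z, ‖z‖ ≤ s + h → c ≤ f z) {θ : E} (hθ : ‖θ‖ = 1) {t : ℝ} (ht : |t| ≤ s) :
    c * volume (closedBall (0 : (ℝ ∙ θ)ᗮ) h) ≤ radonTransform f θ t := by
  have hball : ∀ y ∈ closedBall (0 : (ℝ ∙ θ)ᗮ) h, c ≤ f (t • θ + y) := fun y hy => hf _ <|
    calc ‖t • θ + (y : E)‖ ≤ ‖t • θ‖ + ‖y‖ := norm_add_le _ _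
      _ = |t| + ‖y‖ := by rw [norm_smul, hθ, mul_one, Real.norm_eq_abs]
      _ ≤ s + h := add_le_add ht (mem_closedBall_zero_iff.mp hy)
  calc c * volume (closedBall (0 : (ℝ ∙ θ)ᗮ) h)
      = ∫⁻ _ in closedBall (0 : (ℝ ∙ θ)ᗮ) h, c := (setLIntegral_const _ _).symm
    _ ≤ ∫⁻ y in closedBall (0 : (ℝ ∙ θ)ᗮ) h, f (t • θ + y) :=
        setLIntegral_mono' measurableSet_closedBall hball
    _ ≤ radonTransform f θ t := setLIntegral_le_lintegral _ _

theorem projection_density_lower_bound_general {Ω : Type*} [MeasurableSpace Ω] (P : Measure Ω)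
    [IsFiniteMeasure P] {X : Ω → E} (hX : AEMeasurable X P) {f : E → ℝ≥0∞} (hf : Measurable f)
    (hdens : P.map X = volume.withDensity f) {s h c : ℝ}
    (hlower : ∀ z, ‖z‖ ≤ s + h → ENNReal.ofReal c ≤ f z) {θ : E} (hθ : ‖θ‖ = 1) :
    ∃ pθ : ℝ → ℝ, Measurable pθ ∧
      P.map (fun ω => inner ℝ θ (X ω)) = volume.withDensity (fun t => ENNReal.ofReal (pθ t)) ∧
      ∀ᵐ t ∂(volume.restrict (Set.Icc (-s) s)),
        c * volume.real (closedBall (0 : (ℝ ∙ θ)ᗮ) h) ≤ pθ t := by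
  have hmeas := measurable_radonTransform hf θ
  have hlaw : P.map (fun ω => inner ℝ θ (X ω)) = volume.withDensity (radonTransform f θ) := by
    rw [← map_inner_withDensity hf hθ, ← hdens,
      AEMeasurable.map_map_of_aemeasurable (by fun_prop) hX]
    rfl
  have : IsFiniteMeasure (volume.withDensity (radonTransform f θ)) := hlaw ▸ inferInstance
  have hfin := ae_lt_top_of_isFiniteMeasure_withDensity (μ := volume) hmeas.aemeasurable
  refine ⟨fun t => (radonTransform f θ t).toReal, hmeas.ennreal_toReal,
    hlaw.trans (withDensity_congr_ae (ofReal_toReal_ae_eq hfin).symm), ?_⟩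
  filter_upwards [ae_restrict_of_ae hfin, ae_restrict_mem measurableSet_Icc] with t ht hts
  calc c * volume.real (closedBall (0 : (ℝ ∙ θ)ᗮ) h)
      ≤ (ENNReal.ofReal c * volume (closedBall (0 : (ℝ ∙ θ)ᗮ) h)).toReal := by
        rw [ENNReal.toReal_mul, ENNReal.toReal_ofReal']
        exact mul_le_mul_of_nonneg_right (le_max_left c 0) measureReal_nonneg
    _ ≤ (radonTransform f θ t).toReal := ENNReal.toReal_mono ht.ne <|
        mul_volume_closedBall_le_radonTransform hlower hθ (abs_le.mpr hts)

end RadonTransform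

section Coordinates

theorem eNorm_eq_norm_toLp {d : ℕ} (v : Fin d → ℝ) : eNorm v = ‖toLp 2 v‖ := by
  simp only [eNorm, EuclideanSpace.norm_eq, Real.norm_eq_abs, sq_abs]

theorem volume_closedBall_eq_volume_setOf_eNorm_le {F : Type*} [NormedAddCommGroup F]
    [InnerProductSpace ℝ F] [FiniteDimensional ℝ F] [MeasurableSpace F] [BorelSpace F] {n : ℕ}
    (hn : finrank ℝ F = n) (r : ℝ) :
    volume (closedBall (0 : F) r) = volume {z : Fin n → ℝ | eNorm z ≤ r} := by
  subst hn
  have hpres := (stdOrthonormalBasis ℝ F).measurePreserving_repr_symm.comp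
    (PiLp.volume_preserving_toLp (Fin (finrank ℝ F)))
  rw [← hpres.measure_preimage measurableSet_closedBall.nullMeasurableSet]
  congr 1 with z
  simp only [Set.mem_preimage, Function.comp_apply, mem_closedBall_zero_iff,
    LinearIsometryEquiv.norm_map, Set.mem_ofPred_eq, eNorm_eq_norm_toLp]

theorem volume_closedBall_orthogonal_toLp {d : ℕ} {θ : Fin d → ℝ} (hθ : θ ≠ 0) (r : ℝ) :
    volume (closedBall (0 : (ℝ ∙ toLp 2 θ)ᗮ) r) =
      volume {z : Fin (d - 1) → ℝ | eNorm z ≤ r} := by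
  refine volume_closedBall_eq_volume_setOf_eNorm_le ?_ r
  have hadd := (ℝ ∙ toLp 2 θ).finrank_add_finrank_orthogonal
  rw [finrank_span_singleton ((toLp_eq_zero 2).not.mpr hθ), finrank_euclideanSpace_fin] at hadd
  omega

theorem map_toLp_comp_eq_withDensity {Ω ι : Type*} [MeasurableSpace Ω] [Fintype ι]
    {P : Measure Ω} {X : Ω → ι → ℝ} (hX : AEMeasurable X P) {f : (ι → ℝ) → ℝ≥0∞}
    (hf : Measurable f) (hdens : P.map X = volume.withDensity f) :
    P.map (fun ω => toLp 2 (X ω)) = volume.withDensity fun z => f (ofLp z) := by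
  have hcomp : (P.map X).map (toLp 2) = P.map fun ω => toLp 2 (X ω) :=
    AEMeasurable.map_map_of_aemeasurable (by fun_prop) hX
  rw [← hcomp, hdens]
  exact map_withDensity_comp (PiLp.volume_preserving_toLp ι) (f := fun z => f (ofLp z))
    (hf.comp (by fun_prop)).aemeasurable

end Coordinates

/-- if `X` is a random vector in `ℝ^p` (`p ≥ 2`) whose Lebesgue density `p_X`
satisfies `p_X ≥ c` on the closed Euclidean ball of radius `s + h` around the origin, then for
every unit vector `θ` the projection `Xᵀθ` has a Lebesgue density `p_θ` with
`p_θ(t) ≥ c · λ_{p−1}(B_h)` for Lebesgue-almost every `t ∈ [−s, s]`, where `λ_{p−1}(B_h)` is the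
`(p−1)`-dimensional Lebesgue measure of the `(p−1)`-dimensional closed ball of radius `h`. -/
theorem projection_density_lower_bound
    {Ω : Type*} [MeasurableSpace Ω] (P : Measure Ω) [IsProbabilityMeasure P]
    (p : ℕ) (hp : 2 ≤ p) (s h c : ℝ) (hs : 0 < s) (hh : 0 < h) (hc : 0 < c)
    (X : Ω → (Fin p → ℝ)) (hX : Measurable X)
    (pX : (Fin p → ℝ) → ℝ) (hpXmeas : Measurable pX) (hpX0 : ∀ z, 0 ≤ pX z)
    (hdens : Measure.map X P = volume.withDensity fun z => ENNReal.ofReal (pX z))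
    (hlower : ∀ z : Fin p → ℝ, eNorm z ≤ s + h → c ≤ pX z)
    (θ : Fin p → ℝ) (hθ : eNorm θ = 1) :
    ∃ pθ : ℝ → ℝ, Measurable pθ ∧
      Measure.map (fun ω => ∑ j, X ω j * θ j) P
        = volume.withDensity (fun t => ENNReal.ofReal (pθ t)) ∧
      ∀ᵐ t ∂(volume.restrict (Set.Icc (-s) s)),
        c * (volume {z : Fin (p - 1) → ℝ | eNorm z ≤ h}).toReal ≤ pθ t := by
  have hunit : ‖toLp 2 θ‖ = 1 := (eNorm_eq_norm_toLp θ).symm.trans hθ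
  have hθ0 : θ ≠ 0 := by rintro rfl; simp at hunit
  have hdens' := map_toLp_comp_eq_withDensity hX.aemeasurable hpXmeas.ennreal_ofReal hdens
  have hlower' (z : EuclideanSpace ℝ (Fin p)) (hz : ‖z‖ ≤ s + h) :
      ENNReal.ofReal c ≤ ENNReal.ofReal (pX (ofLp z)) :=
    ENNReal.ofReal_le_ofReal (hlower _ ((eNorm_eq_norm_toLp _).trans_le hz))
  simpa only [PiLp.inner_apply, RCLike.inner_apply, conj_trivial, measureReal_def,
    volume_closedBall_orthogonal_toLp hθ0] using
    projection_density_lower_bound_general P (by fun_prop) (by fun_prop) hdens' hlower' hunit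
end
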